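/- arXiv:1001.2092 — 2 statements merged into one kernel-verified Lean document; each statement's English description precedes it below -/
import Mathlib

section
/- Schur functions are eigenvectors of the cut-and-join operator: K s_μ = (κ_μ/2) s_μ, where K = (1/2) Σ_{i,j≥1} ( p_{i+j} · ij ∂²/∂pᵢ∂pⱼ + pᵢpⱼ (i+j) ∂/∂p_{i+j} ) and κ_μ = Σᵢ μᵢ(μᵢ - 2i + 1). -/
open Finset MvPolynomial

/- The ring of symmetric functions is modelled as `Λ = ℚ[p₁, p₂, …] = MvPolynomial ℕ ℚ`,
where the variable `X k` stands for the power sum `p_{k+1}`. -/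

/-- The complete homogeneous symmetric function `h_n`, as a polynomial in the power sums
via Newton's identity. -/
noncomputable def hp : ℕ → MvPolynomial ℕ ℚ
  | 0 => 1
  | n + 1 => ((n : ℚ) + 1)⁻¹ •
      ∑ k ∈ Finset.range (n + 1), MvPolynomial.X k * hp (n - k)
  decreasing_by exact Nat.sub_lt_succ n k

/-- `h_k` extended by `0` to negative indices. -/
noncomputable def HH (k : ℤ) : MvPolynomial ℕ ℚ := if k < 0 then 0 else hp k.toNat

/-- The Schur function `s_μ` as a polynomial in the power sums, via the Jacobi–Trudi
formula. -/
noncomputable def schur (l : ℕ) (μ : ℕ → ℕ) : MvPolynomial ℕ ℚ :=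
  Matrix.det (Matrix.of fun i j : Fin l => HH ((μ i : ℤ) + j - i))

/-- The cut-and-join operator
`K = (1/2) Σ_{i,j ≥ 1} ( p_{i+j} i j ∂²/∂pᵢ∂pⱼ + pᵢ pⱼ (i+j) ∂/∂p_{i+j} )`,
truncated to indices `i, j ≤ B` (which acts like `K` on any symmetric function involving
only `p₁, …, p_B`). -/
noncomputable def cutJoin (B : ℕ) (f : MvPolynomial ℕ ℚ) : MvPolynomial ℕ ℚ :=
  (2 : ℚ)⁻¹ • ∑ i ∈ Finset.Icc 1 B, ∑ j ∈ Finset.Icc 1 B,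
    (X (i + j - 1) * (((i * j : ℕ) : ℚ) • pderiv (i - 1) (pderiv (j - 1) f))
      + ((i + j : ℕ) : ℚ) • (X (i - 1) * X (j - 1) * pderiv (i + j - 1) f))


namespace CJ

/-- the ring of symmetric functions -/
abbrev Lam : Type := MvPolynomial ℕ ℚ

lemma newton (n : ℕ) : (n : Lam) * hp n = ∑ k ∈ range n, X k * hp (n - 1 - k) := by
  cases n with
  | zero => simp
  | succ n =>
    rw [hp, MvPolynomial.smul_eq_C_mul, ← mul_assoc]
    have : ((n + 1 : ℕ) : Lam) * C (((n : ℚ) + 1)⁻¹) = 1 := by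
      rw [← map_natCast (C : ℚ →+* Lam), ← C_mul]
      push_cast
      rw [mul_inv_cancel₀ (by positivity), C_1]
    rw [this, one_mul]
    simp

/-- the derivation `k ∂/∂p_k` -/
noncomputable def DD (k : ℕ) : Derivation ℚ Lam Lam := (k : ℚ) • pderiv (k - 1)

lemma DD_X (k j : ℕ) (hk : 1 ≤ k) : DD k (X j) = if j + 1 = k then (k : Lam) else 0 := by
  simp only [DD, Derivation.smul_apply, pderiv_X, Pi.single_apply]
  have : (j = k - 1) ↔ j + 1 = k := by omega
  simp only [this]
  split_ifs with h
  · rw [MvPolynomial.smul_eq_C_mul]; simp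
  · simp

lemma DD_hp (k : ℕ) (hk : 1 ≤ k) (n : ℕ) : DD k (hp n) = if k ≤ n then hp (n - k) else 0 := by
  induction n using Nat.strong_induction_on with
  | _ n ih =>
  rcases Nat.eq_zero_or_pos n with rfl | hn
  · rw [if_neg (by omega), hp]; simp
  have hn0 : ((n : ℕ) : Lam) ≠ 0 := by exact_mod_cast hn.ne'
  apply mul_left_cancel₀ hn0
  have h1 := congrArg (DD k) (newton n)
  rw [Derivation.leibniz, map_sum] at h1
  simp only [Derivation.leibniz, smul_eq_mul, Derivation.map_natCast, mul_zero, add_zero] at h1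
  rw [h1, sum_add_distrib]
  have h2 : ∀ x ∈ range n, hp (n - 1 - x) * DD k (X x)
      = if x = k - 1 then (k : Lam) * hp (n - k) else 0 := by
    intro x hx
    rw [DD_X _ _ hk]
    by_cases h : x + 1 = k
    · rw [if_pos h, if_pos (by omega), mul_comm]; congr 2; omega
    · rw [if_neg h, if_neg (by omega), mul_zero]
  rw [sum_congr rfl h2, sum_ite_eq']
  have h3 : ∀ x ∈ range n, (X x : Lam) * DD k (hp (n - 1 - x))
      = if x < n - k then X x * hp (n - k - 1 - x) else 0 := by
    intro x hx
    rw [mem_range] at hx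
    rw [ih _ (by omega)]
    by_cases h : x < n - k
    · rw [if_pos h, if_pos (by omega)]; congr 2; omega
    · rw [if_neg h, if_neg (by omega), mul_zero]
  rw [sum_congr rfl h3, ← sum_filter]
  have h4 : (range n).filter (fun x => x < n - k) = range (n - k) := by
    ext x; simp; omega
  rw [h4, ← newton]
  by_cases h : k ≤ n
  · rw [if_pos (by simp; omega), if_pos h]
    rw [Nat.cast_sub h]; ring
  · rw [if_neg (by simp; omega), if_neg h, Nat.sub_eq_zero_of_le (by omega)]; simp

/-- power series ring -/
abbrev RR (l : ℕ) : Type := MvPowerSeries (Fin l) Lam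

variable {l : ℕ}

/-- Euler derivation -/
noncomputable def th (a : Fin l) : Derivation ℤ (RR l) (RR l) :=
  Derivation.mk' (AddMonoidHom.toIntLinearMap
    { toFun := fun f m => ((m a : ℕ) : Lam) * MvPowerSeries.coeff m f
      map_zero' := by funext m; simp; rfl
      map_add' := by intro f g; funext m; simp only [map_add, mul_add]; rfl })
  (by
    intro f g
    ext1 m
    change ((m a : ℕ) : Lam) * MvPowerSeries.coeff m (f * g) = _
    rw [map_add, smul_eq_mul, smul_eq_mul, mul_comm g, MvPowerSeries.coeff_mul,
      MvPowerSeries.coeff_mul, MvPowerSeries.coeff_mul, mul_sum, ← sum_add_distrib]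
    apply sum_congr rfl
    intro x hx
    rw [HasAntidiagonal.mem_antidiagonal] at hx
    change _ = _ * (((x.2 a : ℕ) : Lam) * MvPowerSeries.coeff x.2 g) +
      (((x.1 a : ℕ) : Lam) * MvPowerSeries.coeff x.1 f) * _
    rw [← hx, Finsupp.add_apply, Nat.cast_add]
    ring)

lemma coeff_th (a : Fin l) (f : RR l) (m : Fin l →₀ ℕ) :
    MvPowerSeries.coeff m (th a f) = ((m a : ℕ) : Lam) * MvPowerSeries.coeff m f := rfl

lemma th_monomial (a : Fin l) (n : Fin l →₀ ℕ) (c : Lam) :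
    th a (MvPowerSeries.monomial n c) = ((n a : ℕ) : RR l) * MvPowerSeries.monomial n c := by
  ext1 m
  rw [coeff_th, ← map_natCast (MvPowerSeries.C (σ := Fin l) (R := Lam)),
    MvPowerSeries.coeff_C_mul, MvPowerSeries.coeff_monomial]
  split_ifs with h
  · rw [h]
  · simp

/-- variable -/
noncomputable abbrev zz (a : Fin l) : RR l := MvPowerSeries.X a

lemma th_zz (a b : Fin l) : th a (zz b) = if a = b then zz b else 0 := by
  rw [zz, MvPowerSeries.X, th_monomial]
  by_cases h : a = b
  · subst h; simp
  · rw [if_neg h, Finsupp.single_eq_of_ne h]; simp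

lemma th_zz_pow (a : Fin l) (k : ℕ) : th a (zz a ^ k) = (k : RR l) * zz a ^ k := by
  rw [zz, MvPowerSeries.X_pow_eq, th_monomial]
  simp

lemma th_C (a : Fin l) (c : Lam) : th a (MvPowerSeries.C c) = 0 := by
  rw [← MvPowerSeries.monomial_zero_eq_C_apply, th_monomial]; simp

/-- coefficientwise action of an operator -/
noncomputable def cwise (T : Lam →+ Lam) : RR l →+ RR l where
  toFun f := fun m => T (MvPowerSeries.coeff m f)
  map_zero' := by funext m; simp; rfl
  map_add' := by intro f g; funext m; simp only [map_add]; rfl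

lemma coeff_cwise (T : Lam →+ Lam) (f : RR l) (m : Fin l →₀ ℕ) :
    MvPowerSeries.coeff m (cwise T f) = T (MvPowerSeries.coeff m f) := rfl

/-- series commuting with all coefficientwise operators -/
def Cst (f : RR l) : Prop := ∀ (T : Lam →+ Lam) (g : RR l), cwise T (f * g) = f * cwise T g

lemma Cst_zz (a : Fin l) : Cst (zz a) := by
  intro T g
  ext1 m
  rw [coeff_cwise, zz, MvPowerSeries.X, MvPowerSeries.coeff_monomial_mul,
    MvPowerSeries.coeff_monomial_mul]
  split_ifs
  · rw [one_mul, one_mul, coeff_cwise]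
  · simp

lemma Cst.mul {f g : RR l} (hf : Cst f) (hg : Cst g) : Cst (f * g) := by
  intro T h
  rw [mul_assoc, hf, hg, mul_assoc]

lemma Cst.sub {f g : RR l} (hf : Cst f) (hg : Cst g) : Cst (f - g) := by
  intro T h
  rw [sub_mul, map_sub, hf, hg, sub_mul]

lemma Cst.add {f g : RR l} (hf : Cst f) (hg : Cst g) : Cst (f + g) := by
  intro T h
  rw [add_mul, map_add, hf, hg, add_mul]

lemma Cst_one : Cst (1 : RR l) := by intro T h; simp

lemma Cst_zero : Cst (0 : RR l) := by intro T h; simp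

lemma Cst.pow {f : RR l} (hf : Cst f) (n : ℕ) : Cst (f ^ n) := by
  induction n with
  | zero => simpa using Cst_one
  | succ n ih => rw [pow_succ]; exact ih.mul hf

/-- power sum in the `z` variables -/
noncomputable def pz (l k : ℕ) : RR l := ∑ a : Fin l, zz a ^ k

lemma Cst_pz (k : ℕ) : Cst (pz l k) :=
  Finset.sum_induction _ Cst (fun _ _ => Cst.add) Cst_zero (fun a _ => (Cst_zz a).pow k)

/-- product of the generating functions of the `h_n` -/
noncomputable def GG (l : ℕ) : RR l := fun m => ∏ a : Fin l, hp (m a)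

lemma coeff_GG (m : Fin l →₀ ℕ) : MvPowerSeries.coeff m (GG l) = ∏ a : Fin l, hp (m a) := rfl

lemma deriv_prod {ι : Type*} [DecidableEq ι] {A : Type*} [CommRing A]
    (D : A → A) (h1 : D 1 = 0) (hD : ∀ f g, D (f * g) = f * D g + g * D f)
    (s : Finset ι) (f : ι → A) :
    D (∏ i ∈ s, f i) = ∑ i ∈ s, D (f i) * ∏ j ∈ s.erase i, f j := by
  induction s using Finset.induction_on with
  | empty => simp [h1]
  | insert a s ha ih =>
    rw [prod_insert ha, hD, ih, sum_insert ha, erase_insert ha, mul_sum, add_comm, mul_comm]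
    congr 1
    apply sum_congr rfl
    intro i hi
    have hne : a ≠ i := by rintro rfl; exact ha hi
    rw [erase_insert_of_ne hne, prod_insert (by simp [ha])]
    ring

lemma coeff_zpow_GG (a : Fin l) (k : ℕ) (m : Fin l →₀ ℕ) :
    MvPowerSeries.coeff m (zz a ^ k * GG l) =
      (if k ≤ m a then hp (m a - k) else 0) * ∏ j ∈ univ.erase a, hp (m j) := by
  rw [zz, MvPowerSeries.X_pow_eq, MvPowerSeries.coeff_monomial_mul]
  have : Finsupp.single a k ≤ m ↔ k ≤ m a := by simp
  simp only [this]
  split_ifs with h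
  · rw [one_mul, coeff_GG, ← mul_prod_erase univ _ (mem_univ a)]
    congr 1
    · simp
    · apply prod_congr rfl
      intro j hj
      have : j ≠ a := ne_of_mem_erase hj
      simp [Finsupp.single_eq_of_ne this]
  · simp

/-- `DD k` as additive map -/
noncomputable def DDa (k : ℕ) : Lam →+ Lam := (DD k).toLinearMap.toAddMonoidHom

lemma DDa_apply (k : ℕ) (f : Lam) : DDa k f = DD k f := rfl

lemma cwise_DD_GG (k : ℕ) (hk : 1 ≤ k) : cwise (DDa k) (GG l) = pz l k * GG l := by
  ext1 m
  rw [coeff_cwise, coeff_GG, DDa_apply, deriv_prod (DD k) (by simp) (fun f g => by simp), pz, sum_mul, map_sum]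
  apply sum_congr rfl
  intro a _
  rw [coeff_zpow_GG, DD_hp k hk]


/-- series with no terms of degree `< d` -/
def JJ (l d : ℕ) : Ideal (RR l) where
  carrier := {f | ∀ m : Fin l →₀ ℕ, m.degree < d → MvPowerSeries.coeff m f = 0}
  zero_mem' := by intro m _; simp
  add_mem' := by intro f g hf hg m hm; rw [map_add, hf m hm, hg m hm, add_zero]
  smul_mem' := by
    intro c f hf m hm
    rw [smul_eq_mul, MvPowerSeries.coeff_mul]
    apply sum_eq_zero
    intro x hx
    rw [HasAntidiagonal.mem_antidiagonal] at hx
    rw [hf x.2, mul_zero]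
    rw [← hx, map_add] at hm
    omega

lemma mem_JJ {d : ℕ} {f : RR l} :
    f ∈ JJ l d ↔ ∀ m : Fin l →₀ ℕ, m.degree < d → MvPowerSeries.coeff m f = 0 := Iff.rfl

lemma JJ_mul {d e : ℕ} {f g : RR l} (hf : f ∈ JJ l d) (hg : g ∈ JJ l e) :
    f * g ∈ JJ l (d + e) := by
  rw [mem_JJ] at *
  intro m hm
  rw [MvPowerSeries.coeff_mul]
  apply sum_eq_zero
  intro x hx
  rw [HasAntidiagonal.mem_antidiagonal] at hx
  rw [← hx, map_add] at hm
  by_cases h : x.1.degree < d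
  · rw [hf _ h, zero_mul]
  · rw [hg _ (by omega), mul_zero]

lemma JJ_anti {d e : ℕ} (h : d ≤ e) {f : RR l} (hf : f ∈ JJ l e) : f ∈ JJ l d :=
  fun m hm => hf m (by omega)

lemma th_JJ {d : ℕ} {f : RR l} (hf : f ∈ JJ l d) (a : Fin l) : th a f ∈ JJ l d := by
  intro m hm
  rw [coeff_th, hf m hm, mul_zero]

lemma zpow_JJ (a : Fin l) (k : ℕ) : zz a ^ k ∈ JJ l k := by
  intro m hm
  rw [zz, MvPowerSeries.coeff_X_pow, if_neg]
  rintro rfl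
  simp at hm

/-- truncated power sum generating function -/
noncomputable def PP (B : ℕ) (a : Fin l) : RR l :=
  ∑ k ∈ Icc 1 B, MvPowerSeries.C (X (k - 1) : Lam) * zz a ^ k

lemma newton_GG (B : ℕ) (a : Fin l) : th a (GG l) - PP B a * GG l ∈ JJ l (B + 1) := by
  intro m hm
  rw [map_sub, coeff_th, PP, sum_mul, map_sum, sub_eq_zero]
  simp only [mul_assoc, MvPowerSeries.coeff_C_mul, coeff_zpow_GG]
  rw [coeff_GG, ← mul_prod_erase univ _ (mem_univ a), ← mul_assoc, newton, sum_mul]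
  have hmB : m a ≤ B := by
    have := Finsupp.le_degree a m
    omega
  rw [← sum_subset (s₁ := Icc 1 (m a)) (s₂ := Icc 1 B)]
  · rw [range_eq_Ico, sum_Ico_eq_sum_range, ← Finset.Ico_add_one_right_eq_Icc, sum_Ico_eq_sum_range]
    simp only [Nat.add_sub_cancel, Nat.sub_zero]
    apply sum_congr rfl
    intro x hx
    rw [mem_range] at hx
    rw [if_pos (by omega), ← mul_assoc]
    congr 3
    · omega
    · omega
  · intro x; simp only [mem_Icc]; omega
  · intro x _ hx
    rw [if_neg]
    · simp
    · simp only [mem_Icc] at *; omega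

/-- truncated `Q` -/
noncomputable def QQ (B : ℕ) (a b : Fin l) : RR l :=
  ∑ k ∈ Icc 1 B, MvPowerSeries.C (X (k - 1) : Lam) * ∑ i ∈ Ico 1 k, zz a ^ i * zz b ^ (k - i)

lemma geom_aux {A : Type*} [CommRing A] (z w : A) (k : ℕ) (hk : 1 ≤ k) :
    (z - w) * ∑ i ∈ Ico 1 k, z ^ i * w ^ (k - i) = w * z ^ k - z * w ^ k := by
  induction k, hk using Nat.le_induction with
  | base => simp; ring
  | succ k hk ih =>
    rw [sum_Ico_succ_top hk]
    have : ∑ i ∈ Ico 1 k, z ^ i * w ^ (k + 1 - i) = w * ∑ i ∈ Ico 1 k, z ^ i * w ^ (k - i) := by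
      rw [mul_sum]
      apply sum_congr rfl
      intro i hi
      rw [mem_Ico] at hi
      rw [show k + 1 - i = (k - i) + 1 by omega, pow_succ]; ring
    rw [this, mul_add, mul_left_comm, ih, Nat.add_sub_cancel_left]
    ring

lemma QQ_mul (B : ℕ) (a b : Fin l) :
    (zz a - zz b) * QQ B a b = zz b * PP B a - zz a * PP B b := by
  rw [QQ, PP, PP, mul_sum, mul_sum, mul_sum, ← sum_sub_distrib]
  apply sum_congr rfl
  intro k hk
  rw [mem_Icc] at hk
  rw [mul_left_comm, geom_aux _ _ _ hk.1]
  ring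

lemma QQ_self (B : ℕ) (a : Fin l) : QQ B a a = th a (PP B a) - PP B a := by
  rw [QQ, PP, map_sum, ← sum_sub_distrib]
  apply sum_congr rfl
  intro k hk
  rw [mem_Icc] at hk
  rw [Derivation.leibniz, th_C, th_zz_pow, smul_zero, add_zero, smul_eq_mul, ← mul_sub]
  congr 1
  have : ∀ i ∈ Ico 1 k, zz a ^ i * zz a ^ (k - i) = zz a ^ k := by
    intro i hi
    rw [mem_Ico] at hi
    rw [← pow_add]; congr 1; omega
  rw [sum_congr rfl this, sum_const, Nat.card_Ico, nsmul_eq_mul, Nat.cast_sub hk.1]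
  push_cast; ring

/-- exponents matrix -/
noncomputable def VV (l : ℕ) : Matrix (Fin l) (Fin l) (RR l) :=
  Matrix.of fun a j => zz a ^ (l - 1 - (j : ℕ))

/-- Vandermonde -/
noncomputable def dl (l : ℕ) : RR l := (VV l).det

lemma dl_prod : dl l = ∏ i : Fin l, ∏ j ∈ Ioi i, (zz i - zz j) := by
  have := Matrix.det_projVandermonde (fun _ => 1) (fun i : Fin l => zz i)
  rw [dl]
  simp only [one_mul] at this
  rw [← this]
  congr 1
  ext1 i j
  rw [VV, Matrix.projVandermonde_apply]
  simp only [Matrix.of_apply, one_pow, one_mul, Fin.val_rev]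
  congr 1; omega

lemma Cst_dl : Cst (dl l) := by
  rw [dl_prod]
  apply Finset.prod_induction _ Cst (fun _ _ => Cst.mul) Cst_one
  intro i _
  apply Finset.prod_induction _ Cst (fun _ _ => Cst.mul) Cst_one
  intro j _
  exact (Cst_zz i).sub (Cst_zz j)

/-- the exponent of a permutation -/
noncomputable def ex (s : Equiv.Perm (Fin l)) : Fin l →₀ ℕ :=
  Finsupp.equivFunOnFinite.symm fun a => l - 1 - (s a : ℕ)

lemma ex_apply (s : Equiv.Perm (Fin l)) (a : Fin l) : ex s a = l - 1 - (s a : ℕ) := rfl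

lemma prod_zz (n : Fin l →₀ ℕ) : ∏ a : Fin l, zz a ^ (n a) = MvPowerSeries.monomial n (1 : Lam) := by
  rw [MvPowerSeries.monomial_eq', map_one, one_mul, Finsupp.prod_fintype]
  intro i; simp

lemma dl_sum : dl l = ∑ s : Equiv.Perm (Fin l),
    ((Equiv.Perm.sign s : ℤ) : RR l) * MvPowerSeries.monomial (ex s) (1 : Lam) := by
  rw [dl, ← Matrix.det_transpose, Matrix.det_apply']
  apply sum_congr rfl
  intro s _
  congr 1
  rw [← prod_zz]
  rfl

lemma th_int (a : Fin l) (n : ℤ) : th a (n : RR l) = 0 := by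
  simp

lemma sum_ex (s : Equiv.Perm (Fin l)) (f : ℕ → ℕ) :
    ∑ a, f (ex s a) = ∑ i ∈ range l, f i := by
  simp only [ex_apply]
  rw [Equiv.sum_comp s (fun j : Fin l => f (l - 1 - (j : ℕ))),
    Fin.sum_univ_eq_sum_range (fun j => f (l - 1 - j)), sum_range_reflect]

lemma sum_th_dl : ∑ a : Fin l, th a (dl l) = ((∑ i ∈ range l, i : ℕ) : RR l) * dl l := by
  rw [dl_sum]
  simp only [map_sum, Derivation.leibniz, th_int, smul_eq_mul, mul_zero, add_zero, th_monomial]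
  rw [sum_comm, mul_sum]
  apply sum_congr rfl
  intro s _
  rw [← mul_sum, ← sum_mul, mul_left_comm]
  congr 2
  rw [← sum_ex s (fun i => i)]
  push_cast; rfl

lemma sum_th_th_dl : ∑ a : Fin l, th a (th a (dl l)) = ((∑ i ∈ range l, i ^ 2 : ℕ) : RR l) * dl l := by
  rw [dl_sum]
  simp only [map_sum, Derivation.leibniz, th_int, smul_eq_mul, mul_zero, add_zero, th_monomial,
    Derivation.map_natCast]
  rw [sum_comm, mul_sum]
  apply sum_congr rfl
  intro s _
  rw [← sum_ex s (fun i => i ^ 2), Nat.cast_sum, sum_mul]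
  apply sum_congr rfl
  intro a _
  push_cast
  ring

lemma dl_mem : dl l ∈ JJ l (∑ i ∈ range l, i) := by
  rw [dl_sum]
  apply Ideal.sum_mem
  intro s _
  apply Ideal.mul_mem_left
  intro m hm
  rw [MvPowerSeries.coeff_monomial, if_neg]
  rintro rfl
  rw [Finsupp.degree_eq_sum, sum_ex s (fun i => i)] at hm
  exact lt_irrefl _ hm

lemma zz_sub_ne {a b : Fin l} (h : a ≠ b) : (zz a - zz b : RR l) ≠ 0 := by
  intro h0
  have := congrArg (MvPowerSeries.coeff (Finsupp.single a 1)) h0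
  rw [map_sub, MvPowerSeries.coeff_index_single_X, MvPowerSeries.coeff_index_single_X] at this
  simp [h] at this

/-- fraction field -/
abbrev LL (l : ℕ) : Type := FractionRing (RR l)

/-- embedding -/
noncomputable abbrev emb : RR l →+* LL l := algebraMap (RR l) (LL l)

lemma log_prod {ι : Type*} [DecidableEq ι] (D : Derivation ℤ (RR l) (RR l)) (s : Finset ι)
    (f : ι → RR l) (hf : ∀ i ∈ s, emb (f i) ≠ 0) :
    emb (D (∏ i ∈ s, f i)) = emb (∏ i ∈ s, f i) * ∑ i ∈ s, emb (D (f i)) / emb (f i) := by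
  rw [deriv_prod D (by simp) (fun f g => by simp), map_sum, mul_sum]
  apply sum_congr rfl
  intro i hi
  rw [← mul_prod_erase s f hi, map_mul, map_mul]
  field_simp [hf i hi]

lemma emb_ne {f : RR l} (h : f ≠ 0) : emb f ≠ 0 := by
  rw [Ne, map_eq_zero_iff _ (IsFractionRing.injective (RR l) (LL l))]; exact h

lemma th_dl (a : Fin l) : emb (th a (dl l)) =
    emb (dl l) * ∑ b ∈ univ.erase a, emb (zz a) / (emb (zz a) - emb (zz b)) := by
  have hne : ∀ i j : Fin l, j ∈ Ioi i → emb (zz i - zz j) ≠ 0 := by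
    intro i j h
    exact emb_ne (zz_sub_ne (ne_of_lt (mem_Ioi.1 h)))
  rw [dl_prod, log_prod]
  · congr 1
    have h1 : ∀ i : Fin l, emb (th a (∏ j ∈ Ioi i, (zz i - zz j))) / emb (∏ j ∈ Ioi i, (zz i - zz j))
        = ∑ j ∈ Ioi i, ((if a = i then emb (zz i) / (emb (zz i) - emb (zz j)) else 0)
          + (if a = j then emb (zz j) / (emb (zz j) - emb (zz i)) else 0)) := by
      intro i
      rw [log_prod _ _ _ (fun j hj => hne i j hj), mul_div_cancel_left₀]
      · apply sum_congr rfl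
        intro j hj
        have h2 := hne i j hj
        rw [map_sub] at h2
        have h3 : emb (zz j) - emb (zz i) ≠ 0 := by rwa [← neg_sub, neg_ne_zero]
        rw [map_sub, th_zz, th_zz, map_sub, map_sub]
        have hij : i ≠ j := ne_of_lt (mem_Ioi.1 hj)
        by_cases hi : a = i
        · have hj : a ≠ j := by rw [hi]; exact hij
          simp [hi, hij]
        · by_cases hj : a = j
          · rw [if_neg hi, if_pos hj, if_neg hi, if_pos hj, map_zero, zero_sub, zero_add]
            rw [← neg_sub (emb (zz i)), div_neg, neg_div]
          · simp [hi, hj]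
      · rw [map_prod]; exact prod_ne_zero_iff.2 (fun j hj => hne i j hj)
    rw [sum_congr rfl (fun i _ => h1 i)]
    rw [Finset.sum_sum_Ioi_add_eq_sum_sum_off_diag
      (fun j i => if a = i then emb (zz i) / (emb (zz i) - emb (zz j)) else 0)]
    have hf : ∀ i : Fin l, (∑ j ∈ {i}ᶜ, if a = i then emb (zz i) / (emb (zz i) - emb (zz j)) else 0)
        = if a = i then ∑ j ∈ univ.erase i, emb (zz i) / (emb (zz i) - emb (zz j)) else 0 := by
      intro i
      rw [compl_singleton]
      split_ifs <;> simp
    rw [sum_congr rfl (fun i _ => hf i), sum_ite_eq]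
    simp
  · intro i _
    rw [map_prod]; exact prod_ne_zero_iff.2 (fun j hj => hne i j hj)

lemma core (B : ℕ) : dl l * ∑ a : Fin l, ∑ b ∈ univ.erase a, QQ B a b
    = 2 * ∑ a : Fin l, PP B a * (th a (dl l) - ((l : RR l) - 1) * dl l) := by
  apply IsFractionRing.injective (RR l) (LL l)
  change emb _ = emb _
  simp only [map_mul, map_sum, map_sub, th_dl, map_ofNat, map_natCast, map_one]
  have hQ : ∀ a b : Fin l, b ∈ univ.erase a → emb (QQ B a b) =
      emb (PP B a) * (emb (zz b) / (emb (zz a) - emb (zz b)))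
      + emb (PP B b) * (emb (zz a) / (emb (zz b) - emb (zz a))) := by
    intro a b hb
    have hab : a ≠ b := (ne_of_mem_erase hb).symm
    have h1 := congrArg emb (QQ_mul B a b)
    have h2 := emb_ne (zz_sub_ne hab)
    have h3 := emb_ne (zz_sub_ne hab.symm)
    simp only [map_mul, map_sub] at h1 h2 h3
    rw [← neg_sub (emb (zz a)), div_neg]
    field_simp
    linear_combination h1
  rw [sum_congr rfl (fun a _ => sum_congr rfl (hQ a))]
  simp only [sum_add_distrib]
  have hs : ∀ v : Fin l → Fin l → LL l, ∑ a, ∑ b ∈ univ.erase a, v b a = ∑ a, ∑ b ∈ univ.erase a, v a b := by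
    intro v
    rw [Finset.sum_comm']
    intro x y; simp [eq_comm]
  rw [hs (fun a b => emb (PP B a) * (emb (zz b) / (emb (zz a) - emb (zz b)))), ← two_mul,
    mul_left_comm, mul_sum]
  congr 1
  apply sum_congr rfl
  intro a _
  rw [← mul_sum, mul_left_comm]
  congr 1
  have : ∑ b ∈ univ.erase a, emb (zz b) / (emb (zz a) - emb (zz b)) =
      ∑ b ∈ univ.erase a, (emb (zz a) / (emb (zz a) - emb (zz b)) - 1) := by
    apply sum_congr rfl
    intro b hb
    have h2 := emb_ne (zz_sub_ne (ne_of_mem_erase hb).symm)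
    rw [map_sub] at h2
    field_simp
    ring
  rw [this, sum_sub_distrib, sum_const, card_erase_of_mem (mem_univ a), card_univ, Fintype.card_fin,
    nsmul_eq_mul, mul_one, Nat.cast_sub (by have := a.2; omega)]
  push_cast; ring

/-- the generating function of Schur functions -/
noncomputable def FF (l : ℕ) : RR l := dl l * GG l

lemma cwise_DD_FF (k : ℕ) (hk : 1 ≤ k) : cwise (DDa k) (FF l) = pz l k * FF l := by
  rw [FF, Cst_dl, cwise_DD_GG k hk]; ring

lemma DD_coeff (k : ℕ) (hk : 1 ≤ k) (m : Fin l →₀ ℕ) :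
    DD k (MvPowerSeries.coeff m (FF l)) = MvPowerSeries.coeff m (pz l k * FF l) := by
  rw [← cwise_DD_FF k hk, coeff_cwise, DDa_apply]

lemma DD_DD_coeff (i j : ℕ) (hi : 1 ≤ i) (hj : 1 ≤ j) (m : Fin l →₀ ℕ) :
    DD i (DD j (MvPowerSeries.coeff m (FF l)))
      = MvPowerSeries.coeff m (pz l i * pz l j * FF l) := by
  rw [DD_coeff j hj, ← DDa_apply, ← coeff_cwise, Cst_pz, cwise_DD_FF i hi]
  congr 1; ring

/-- symbol of the cut-and-join operator -/
noncomputable def WW (l B : ℕ) : RR l :=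
  ∑ i ∈ Icc 1 B, ∑ j ∈ Icc 1 B,
    (MvPowerSeries.C (X (i + j - 1) : Lam) * (pz l i * pz l j)
      + MvPowerSeries.C (X (i - 1) : Lam) * MvPowerSeries.C (X (j - 1) : Lam) * pz l (i + j))

lemma cutJoin_coeff (B : ℕ) (m : Fin l →₀ ℕ) :
    cutJoin B (MvPowerSeries.coeff m (FF l))
      = (2 : ℚ)⁻¹ • MvPowerSeries.coeff m (WW l B * FF l) := by
  rw [cutJoin, WW]
  congr 1
  rw [sum_mul, map_sum]
  apply sum_congr rfl
  intro i hi
  rw [sum_mul, map_sum]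
  apply sum_congr rfl
  intro j hj
  rw [mem_Icc] at hi hj
  rw [add_mul, map_add, mul_assoc (MvPowerSeries.C _) _ (FF l), MvPowerSeries.coeff_C_mul,
    mul_assoc _ (pz l (i + j)), mul_assoc (MvPowerSeries.C _) (MvPowerSeries.C _),
    MvPowerSeries.coeff_C_mul, MvPowerSeries.coeff_C_mul, ← DD_DD_coeff i j hi.1 hj.1,
    ← DD_coeff (i + j) (by omega)]
  congr 1
  · congr 1
    simp only [DD, Derivation.smul_apply]
    rw [Derivation.map_smul, smul_smul]
    push_cast; rfl
  · simp only [DD, Derivation.smul_apply]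
    rw [mul_smul_comm, mul_smul_comm, mul_assoc]

lemma QQ_trunc (B : ℕ) (a b : Fin l) :
    ∑ i ∈ Icc 1 B, ∑ j ∈ Icc 1 B, MvPowerSeries.C (X (i + j - 1) : Lam) * (zz a ^ i * zz b ^ j)
      - QQ B a b ∈ JJ l (B + 1) := by
  have h : QQ B a b = ∑ x ∈ (Icc 1 B ×ˢ Icc 1 B).filter (fun x => x.1 + x.2 ≤ B),
      MvPowerSeries.C (X (x.1 + x.2 - 1) : Lam) * (zz a ^ x.1 * zz b ^ x.2) := by
    rw [QQ]
    simp only [mul_sum]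
    rw [sum_sigma']
    refine sum_nbij' (fun x => (x.2, x.1 - x.2)) (fun x => ⟨x.1 + x.2, x.1⟩) ?_ ?_ ?_ ?_ ?_
    · rintro ⟨k, i⟩ h
      simp only [mem_sigma, mem_Icc, mem_Ico, mem_filter, mem_product] at *
      omega
    · rintro ⟨k, i⟩ h
      simp only [mem_sigma, mem_Icc, mem_Ico, mem_filter, mem_product] at *
      omega
    · rintro ⟨k, i⟩ h
      simp only [mem_sigma, mem_Icc, mem_Ico] at h
      have : i + (k - i) = k := by omega
      simp [this]
    · rintro ⟨k, i⟩ h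
      simp
    · rintro ⟨k, i⟩ h
      simp only [mem_sigma, mem_Icc, mem_Ico] at h
      have : i + (k - i) = k := by omega
      simp [this]
  rw [h, ← sum_product', ← sum_filter_add_sum_filter_not _ (fun x => x.1 + x.2 ≤ B),
    add_sub_cancel_left]
  apply Ideal.sum_mem
  intro x hx
  rw [mem_filter] at hx
  apply Ideal.mul_mem_left
  exact JJ_anti (by omega) (JJ_mul (zpow_JJ a x.1) (zpow_JJ b x.2))

lemma WW_trunc (B : ℕ) :
    WW l B - (∑ a : Fin l, ∑ b : Fin l, QQ B a b + ∑ a : Fin l, PP B a ^ 2) ∈ JJ l (B + 1) := by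
  have h : WW l B = (∑ a : Fin l, ∑ b : Fin l, ∑ i ∈ Icc 1 B, ∑ j ∈ Icc 1 B,
      MvPowerSeries.C (X (i + j - 1) : Lam) * (zz a ^ i * zz b ^ j))
      + ∑ a : Fin l, PP B a ^ 2 := by
    rw [WW]
    simp only [sum_add_distrib]
    congr 1
    · simp only [pz, sum_mul_sum]
      simp only [mul_sum]
      simp only [← sum_product' univ univ, ← sum_product' (Icc 1 B) (Icc 1 B)]
      rw [sum_comm]
    · simp only [PP, sq, sum_mul_sum]
      simp only [pz, mul_sum]
      simp only [← sum_product' (Icc 1 B) (Icc 1 B)]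
      rw [sum_comm]
      apply sum_congr rfl
      intro a _
      apply sum_congr rfl
      intro x _
      rw [pow_add]; ring
  rw [h, add_sub_add_right_eq_sub]
  simp only [← sum_sub_distrib]
  apply Ideal.sum_mem
  intro a _
  apply Ideal.sum_mem
  intro b _
  exact QQ_trunc B a b

lemma main_mem (B : ℕ) :
    WW l B * FF l - (∑ a : Fin l, (th a (th a (FF l)) - (2 * (l : RR l) - 1) * th a (FF l))
      - (((∑ i ∈ range l, i ^ 2 : ℕ) : RR l)
        - (2 * (l : RR l) - 1) * ((∑ i ∈ range l, i : ℕ) : RR l)) * FF l)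
      ∈ JJ l (B + 1 + ∑ i ∈ range l, i) := by
  have hE := fun a : Fin l => newton_GG B a
  have e1 : ∀ a : Fin l, th a (FF l) = dl l * th a (GG l) + th a (dl l) * GG l := by
    intro a; rw [FF, Derivation.leibniz, smul_eq_mul, smul_eq_mul]; ring
  have e2 : ∀ a : Fin l, th a (th a (FF l)) = dl l * th a (th a (GG l))
      + 2 * th a (dl l) * th a (GG l) + th a (th a (dl l)) * GG l := by
    intro a
    rw [e1, map_add, Derivation.leibniz, Derivation.leibniz]
    simp only [smul_eq_mul]; ring
  have e3 : ∀ a : Fin l, th a (th a (GG l)) = th a (th a (GG l) - PP B a * GG l)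
      + th a (PP B a) * GG l + PP B a * th a (GG l) := by
    intro a
    rw [map_sub, Derivation.leibniz]
    simp only [smul_eq_mul]; ring
  have hQ : ∑ a : Fin l, ∑ b : Fin l, QQ B a b
      = ∑ a : Fin l, ∑ b ∈ univ.erase a, QQ B a b + ∑ a : Fin l, (th a (PP B a) - PP B a) := by
    rw [← sum_add_distrib]
    apply sum_congr rfl
    intro a _
    rw [← QQ_self, sum_erase_add _ _ (mem_univ a)]
  set S := ∑ a : Fin l, ∑ b : Fin l, QQ B a b + ∑ a : Fin l, PP B a ^ 2 with hS
  have hsplit : S * FF l = ∑ a : Fin l, (dl l * (th a (PP B a) - PP B a + PP B a ^ 2) * GG l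
      + 2 * (PP B a * (th a (dl l) - ((l : RR l) - 1) * dl l)) * GG l) := by
    rw [sum_add_distrib, ← sum_mul, ← sum_mul, ← mul_sum, ← mul_sum, ← core, sum_add_distrib, hS, hQ, FF]
    ring
  have hc : (((∑ i ∈ range l, i ^ 2 : ℕ) : RR l)
        - (2 * (l : RR l) - 1) * ((∑ i ∈ range l, i : ℕ) : RR l)) * FF l
      = ∑ a : Fin l, (th a (th a (dl l)) - (2 * (l : RR l) - 1) * th a (dl l)) * GG l := by
    rw [← sum_mul, sum_sub_distrib, ← mul_sum, sum_th_dl, sum_th_th_dl, FF]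
    ring
  have key : WW l B * FF l - (∑ a : Fin l, (th a (th a (FF l)) - (2 * (l : RR l) - 1) * th a (FF l))
      - (((∑ i ∈ range l, i ^ 2 : ℕ) : RR l)
        - (2 * (l : RR l) - 1) * ((∑ i ∈ range l, i : ℕ) : RR l)) * FF l)
      = (WW l B - S) * dl l * GG l - ∑ a : Fin l,
        ((th a (th a (GG l) - PP B a * GG l) * dl l
          + PP B a * ((th a (GG l) - PP B a * GG l) * dl l))
          + 2 * ((th a (GG l) - PP B a * GG l) * th a (dl l))
          - (2 * (l : RR l) - 1) * ((th a (GG l) - PP B a * GG l) * dl l)) := by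
    have : (WW l B - S) * dl l * GG l = WW l B * FF l - S * FF l := by rw [FF]; ring
    rw [this, hsplit, hc, ← sum_sub_distrib, sub_sub, ← sum_add_distrib]
    congr 1
    apply sum_congr rfl
    intro a _
    rw [e2, e1, e3]
    ring
  rw [key]
  have hd := dl_mem (l := l)
  apply Ideal.sub_mem
  · exact Ideal.mul_mem_right _ _ (JJ_mul (WW_trunc B) hd)
  · apply Ideal.sum_mem
    intro a _
    have m1 := JJ_mul (hE a) hd
    exact Ideal.sub_mem _ (Ideal.add_mem _ (Ideal.add_mem _ (JJ_mul (th_JJ (hE a) a) hd)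
      (Ideal.mul_mem_left _ _ m1)) (Ideal.mul_mem_left _ _ (JJ_mul (hE a) (th_JJ hd a))))
      (Ideal.mul_mem_left _ _ m1)

lemma coeff_main (B : ℕ) (m : Fin l →₀ ℕ) (hm : m.degree ≤ B + ∑ i ∈ range l, i) :
    MvPowerSeries.coeff m (WW l B * FF l) =
      ((∑ a : Fin l, ((m a : Lam) ^ 2 - (2 * (l : Lam) - 1) * (m a : Lam)))
        - (((∑ i ∈ range l, i ^ 2 : ℕ) : Lam) - (2 * (l : Lam) - 1) * ((∑ i ∈ range l, i : ℕ) : Lam)))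
      * MvPowerSeries.coeff m (FF l) := by
  have h := main_mem (l := l) B m (by omega)
  rw [map_sub, sub_eq_zero] at h
  rw [h]
  have hC : ∀ c : Lam, ∀ f : RR l, MvPowerSeries.coeff m (MvPowerSeries.C c * f)
    = c * MvPowerSeries.coeff m f := fun c f => MvPowerSeries.coeff_C_mul _ _ _
  have c1 : (2 * (l : RR l) - 1) = MvPowerSeries.C (2 * (l : Lam) - 1) := by
    simp only [map_sub, map_mul, map_natCast, map_one, map_ofNat]
  have c2 : (((∑ i ∈ range l, i ^ 2 : ℕ) : RR l)
        - (2 * (l : RR l) - 1) * ((∑ i ∈ range l, i : ℕ) : RR l))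
      = MvPowerSeries.C (((∑ i ∈ range l, i ^ 2 : ℕ) : Lam)
        - (2 * (l : Lam) - 1) * ((∑ i ∈ range l, i : ℕ) : Lam)) := by
    simp only [map_sub, map_mul, map_natCast, map_one, map_ofNat]
  rw [c2, map_sub, map_sum, hC, sub_mul (∑ a : Fin l, _), sum_mul]
  congr 1
  apply sum_congr rfl
  intro a _
  rw [map_sub, c1, hC, coeff_th, coeff_th]
  ring

/-- the exponent `μ + δ` -/
noncomputable def md (l : ℕ) (μ : ℕ → ℕ) : Fin l →₀ ℕ :=
  Finsupp.equivFunOnFinite.symm fun a => μ a + (l - 1 - (a : ℕ))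

lemma md_apply (μ : ℕ → ℕ) (a : Fin l) : md l μ a = μ a + (l - 1 - (a : ℕ)) := rfl

lemma coeff_FF (μ : ℕ → ℕ) : MvPowerSeries.coeff (md l μ) (FF l) = schur l μ := by
  rw [FF, dl_sum, sum_mul, map_sum, schur, ← Matrix.det_transpose, Matrix.det_apply']
  apply sum_congr rfl
  intro s _
  rw [mul_assoc, ← map_intCast (MvPowerSeries.C (σ := Fin l) (R := Lam)),
    MvPowerSeries.coeff_C_mul, MvPowerSeries.coeff_monomial_mul]
  congr 1
  by_cases h : ex s ≤ md l μ
  · rw [if_pos h, one_mul, coeff_GG]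
    apply prod_congr rfl
    intro a _
    have ha := h a
    rw [ex_apply, md_apply] at ha
    have := a.2
    have := (s a).2
    rw [Finsupp.tsub_apply, ex_apply, md_apply, Matrix.transpose_apply, Matrix.of_apply, HH,
      if_neg (by omega)]
    congr 1
    omega
  · rw [if_neg h]
    obtain ⟨a, ha⟩ : ∃ a, ¬ ex s a ≤ md l μ a := by
      by_contra! hh
      exact h hh
    rw [ex_apply, md_apply] at ha
    have := a.2
    have := (s a).2
    symm
    apply prod_eq_zero (mem_univ a)
    rw [Matrix.transpose_apply, Matrix.of_apply, HH, if_pos (by omega)]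

lemma sum_rev (l : ℕ) (f : ℕ → ℕ) : ∑ i ∈ range l, f i = ∑ i ∈ range l, f (l - 1 - i) :=
  (sum_range_reflect f l).symm

lemma degree_md (μ : ℕ → ℕ) : (md l μ).degree = ∑ i ∈ range l, μ i + ∑ i ∈ range l, i := by
  rw [Finsupp.degree_eq_sum]
  simp only [md_apply]
  rw [sum_add_distrib, Fin.sum_univ_eq_sum_range, Fin.sum_univ_eq_sum_range (fun a => l - 1 - a),
    sum_rev l (fun i => i)]

lemma eig (μ : ℕ → ℕ) : (∑ a : Fin l, ((md l μ a : ℚ) ^ 2 - (2 * (l : ℚ) - 1) * (md l μ a : ℚ)))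
        - (((∑ i ∈ range l, i ^ 2 : ℕ) : ℚ) - (2 * (l : ℚ) - 1) * ((∑ i ∈ range l, i : ℕ) : ℚ))
    = (((∑ i ∈ range l, (μ i : ℤ) * ((μ i : ℤ) - 2 * (i + 1) + 1)) : ℤ) : ℚ) := by
  simp only [md_apply]
  rw [Fin.sum_univ_eq_sum_range (fun a => (((μ a + (l - 1 - a) : ℕ) : ℚ)) ^ 2
    - (2 * (l : ℚ) - 1) * ((μ a + (l - 1 - a) : ℕ) : ℚ)), sum_rev l (fun i => i),
    sum_rev l (fun i => i ^ 2)]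
  push_cast
  rw [mul_sum, ← sum_sub_distrib, ← sum_sub_distrib]
  apply sum_congr rfl
  intro i hi
  rw [mem_range] at hi
  have : ((l - 1 - i : ℕ) : ℚ) = (l : ℚ) - 1 - i := by
    rw [Nat.cast_sub (by omega), Nat.cast_sub (by omega)]; simp
  rw [this]
  ring

end CJ

/-- Schur functions are eigenvectors of the cut-and-join operator:
`K s_μ = (κ_μ / 2) s_μ` with `κ_μ = Σᵢ μᵢ (μᵢ - 2 i + 1)`.  The truncation bound `B` is
any number at least `|μ|`, which makes the truncated operator agree with `K` on `s_μ`. -/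
theorem cut_and_join_schur (l : ℕ) (μ : ℕ → ℕ)
    (hmono : ∀ i j, i ≤ j → μ j ≤ μ i)
    (hsupp : ∀ i, l ≤ i → μ i = 0)
    (B : ℕ) (hB : ∑ i ∈ range l, μ i ≤ B) :
    cutJoin B (schur l μ)
      = ((((∑ i ∈ range l, (μ i : ℤ) * ((μ i : ℤ) - 2 * (i + 1) + 1)) : ℤ) : ℚ) / 2) •
          schur l μ := by
  have h1 := CJ.cutJoin_coeff B (CJ.md l μ)
  rw [CJ.coeff_main B (CJ.md l μ) (by rw [CJ.degree_md]; omega), CJ.coeff_FF] at h1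
  rw [h1, ← CJ.eig μ, MvPolynomial.smul_eq_C_mul, MvPolynomial.smul_eq_C_mul, ← mul_assoc]
  congr 1
  rw [div_eq_inv_mul, C_mul]
  congr 1
  simp only [map_sub, map_sum, map_mul, map_pow, map_natCast, map_one, map_ofNat]
end

section
/- If the power sums are specialized to p_n = (aⁿ - bⁿ)/(1 - qⁿ) for all n ≥ 1, then the Schur function evaluates to s_μ = q^{n(μ)} Π_{x∈μ} (a - b q^{c(x)})/(1 - q^{h(x)}), where c(x) is the content and h(x) the hook length of box x, and n(μ) = Σᵢ (i-1)μᵢ. -/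
open Finset MvPolynomial

noncomputable def Hn (a b q : ℝ) (n : ℕ) : ℝ :=
  ∏ k ∈ range n, (a - b * q ^ k) / (1 - q ^ (k + 1))

noncomputable def HZ (a b q : ℝ) (n : ℤ) : ℝ := if n < 0 then 0 else Hn a b q n.toNat

lemma one_sub_ne {q : ℝ} (hq0 : 0 < q) (hq1 : q < 1) (n : ℕ) : 1 - q ^ (n + 1) ≠ 0 := by
  have := pow_lt_one₀ hq0.le hq1 (Nat.succ_ne_zero n)
  simp only [Nat.succ_eq_add_one] at this
  linarith

lemma Hn_succ (a b : ℝ) {q : ℝ} (hq0 : 0 < q) (hq1 : q < 1) (n : ℕ) :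
    (1 - q ^ (n + 1)) * Hn a b q (n + 1) = (a - b * q ^ n) * Hn a b q n := by
  have := one_sub_ne hq0 hq1 n
  unfold Hn
  rw [prod_range_succ]
  field_simp

lemma newton_H (a b : ℝ) {q : ℝ} (hq0 : 0 < q) (hq1 : q < 1) (n : ℕ) :
    ∑ k ∈ range (n + 1), (a ^ (k + 1) - b ^ (k + 1)) / (1 - q ^ (k + 1)) * Hn a b q (n - k)
      = (n + 1) * Hn a b q (n + 1) := by
  let F : PowerSeries ℝ := PowerSeries.mk (Hn a b q)
  let P : PowerSeries ℝ := PowerSeries.mk fun n => (a ^ n - b ^ n) / (1 - q ^ n)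
  let A : ℝ → PowerSeries ℝ := fun a => PowerSeries.mk fun n => if n = 0 then 0 else a ^ n
  have hA : ∀ a, (1 - PowerSeries.C a * PowerSeries.X) * A a
      = PowerSeries.C a * PowerSeries.X := by
    intro a
    ext n
    rw [sub_mul, one_mul, mul_assoc]
    rcases n with _ | _ | n
    · simp [A]
    · simp [A, PowerSeries.coeff_succ_X_mul, PowerSeries.coeff_X]
    · simp [A, PowerSeries.coeff_succ_X_mul, PowerSeries.coeff_X]
      ring
  have hF : (1 - PowerSeries.C a * PowerSeries.X) * F
      = (1 - PowerSeries.C b * PowerSeries.X) * PowerSeries.rescale q F := by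
    ext n
    rw [sub_mul, one_mul, mul_assoc, sub_mul, one_mul, mul_assoc]
    rcases n with _ | n
    · simp [F, PowerSeries.coeff_rescale, -PowerSeries.coeff_zero_eq_constantCoeff, PowerSeries.coeff_zero_mul_X, PowerSeries.coeff_zero_X_mul]
    · have := Hn_succ a b hq0 hq1 n
      simp [F, PowerSeries.coeff_succ_X_mul, PowerSeries.coeff_rescale]
      linarith
  have hP : P = PowerSeries.rescale q P + A a - A b := by
    ext n
    rcases n with _ | n
    · simp [P, A, PowerSeries.coeff_rescale, -PowerSeries.coeff_zero_eq_constantCoeff, PowerSeries.coeff_zero_mul_X, PowerSeries.coeff_zero_X_mul]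
    · have := one_sub_ne hq0 hq1 n
      simp [P, A, PowerSeries.coeff_rescale]
      field_simp
      ring
  have hG : (1 - PowerSeries.C a * PowerSeries.X) * (F * P)
      = (1 - PowerSeries.C b * PowerSeries.X) * PowerSeries.rescale q (F * P)
        + PowerSeries.C a * (PowerSeries.X * F)
        - PowerSeries.C b * (PowerSeries.X * PowerSeries.rescale q F) := by
    rw [map_mul]
    linear_combination (1 - PowerSeries.C a * PowerSeries.X) * F * hP + F * hA a
      - PowerSeries.rescale q F * hA b + (PowerSeries.rescale q P - A b) * hF
  have key : ∀ n : ℕ, PowerSeries.coeff n (F * P) = n * Hn a b q n := by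
    intro n
    induction n with
    | zero => simp [F, P]
    | succ n ih =>
      have h := congrArg (PowerSeries.coeff (n + 1)) hG
      rw [sub_mul, one_mul, mul_assoc, sub_mul, one_mul, mul_assoc] at h
      simp only [map_sub, map_add, PowerSeries.coeff_C_mul, PowerSeries.coeff_succ_X_mul,
        PowerSeries.coeff_rescale] at h
      rw [ih] at h
      simp only [F, PowerSeries.coeff_mk] at h
      have h1 := Hn_succ a b hq0 hq1 n
      apply mul_left_cancel₀ (one_sub_ne hq0 hq1 n)
      push_cast
      simp only [F]
      linear_combination h - (n + 1 : ℝ) * h1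
  have := key (n + 1)
  rw [mul_comm F P, PowerSeries.coeff_mul, Finset.Nat.sum_antidiagonal_eq_sum_range_succ_mk,
    sum_range_succ'] at this
  simp only [P, F, PowerSeries.coeff_mk] at this
  simpa using this

lemma aeval_hp (a b : ℝ) {q : ℝ} (hq0 : 0 < q) (hq1 : q < 1) (n : ℕ) :
    MvPolynomial.aeval
        (fun k : ℕ => (a ^ (k + 1) - b ^ (k + 1)) / (1 - q ^ (k + 1))) (hp n) = Hn a b q n := by
  induction n using Nat.strong_induction_on with
  | _ n ih =>
    rcases n with _ | n
    · simp [hp, Hn]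
    · rw [hp, map_smul, map_sum]
      have : ∀ k ∈ range (n + 1), MvPolynomial.aeval
        (fun k : ℕ => (a ^ (k + 1) - b ^ (k + 1)) / (1 - q ^ (k + 1)))
          ((MvPolynomial.X k : MvPolynomial ℕ ℚ) * hp (n - k)) =
          (a ^ (k + 1) - b ^ (k + 1)) / (1 - q ^ (k + 1)) * Hn a b q (n - k) := by
        intro k hk
        rw [map_mul, MvPolynomial.aeval_X, ih _ (by omega)]
      rw [sum_congr rfl this, newton_H a b hq0 hq1, Rat.smul_def]
      push_cast
      have : (n : ℝ) + 1 ≠ 0 := by positivity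
      field_simp

lemma aeval_schur (a b : ℝ) {q : ℝ} (hq0 : 0 < q) (hq1 : q < 1) (l : ℕ) (μ : ℕ → ℕ) :
    MvPolynomial.aeval
        (fun k : ℕ => (a ^ (k + 1) - b ^ (k + 1)) / (1 - q ^ (k + 1))) (schur l μ)
      = Matrix.det (Matrix.of fun i j : Fin l => HZ a b q ((μ i : ℤ) + j - i)) := by
  rw [schur, AlgHom.map_det]
  congr 1
  ext i j
  simp only [AlgHom.mapMatrix_apply, Matrix.map_apply, Matrix.of_apply, HH, HZ]
  split_ifs
  · simp
  · exact aeval_hp a b hq0 hq1 _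

lemma HZ_step (a b : ℝ) {q : ℝ} (hq0 : 0 < q) (hq1 : q < 1) (n : ℤ) :
    HZ a (b / q) q n = HZ a b q n - b / q * HZ a b q (n - 1) := by
  rcases lt_trichotomy n 0 with h | h | h
  · simp [HZ, h, show n - 1 < 0 by omega]
  · subst h; simp [HZ, Hn]
  · obtain ⟨m, rfl⟩ : ∃ m : ℕ, n = m + 1 := ⟨(n - 1).toNat, by omega⟩
    have e1 : ¬ ((m : ℤ) + 1 < 0) := by omega
    have e2 : ¬ ((m : ℤ) < 0) := by omega
    have e3 : ((m : ℤ) + 1).toNat = m + 1 := by omega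
    simp only [HZ, e1, e2, e3, if_false, add_sub_cancel_right, Int.toNat_natCast]
    apply mul_left_cancel₀ (one_sub_ne hq0 hq1 m)
    rw [mul_sub, Hn_succ a b hq0 hq1]
    have : (1 - q ^ (m + 1)) * Hn a (b / q) q (m + 1) = (a - b / q) * Hn a b q m := by
      have := one_sub_ne hq0 hq1 m
      unfold Hn
      rw [prod_div_distrib, prod_div_distrib, prod_range_succ', prod_range_succ
        (fun k => 1 - q ^ (k + 1))]
      have h2 : ∀ k, a - b / q * q ^ (k + 1) = a - b * q ^ k := by
        intro k; field_simp; ring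
      simp only [h2]
      field_simp
    rw [this]
    field_simp
    ring

lemma HZ_comb (a b : ℝ) {q : ℝ} (hq0 : 0 < q) (hq1 : q < 1) (j : ℕ) :
    ∃ c : ℕ → ℝ, c j = 1 ∧ ∀ m : ℤ, HZ a (b / q ^ j) q (m + j)
      = ∑ k ∈ range (j + 1), c k * HZ a b q (m + k) := by
  induction j with
  | zero => exact ⟨fun _ => 1, rfl, by simp⟩
  | succ j ih =>
    obtain ⟨c, hc, h⟩ := ih
    refine ⟨fun k => (if k = 0 then 0 else c (k - 1))
      - b / q ^ (j + 1) * (if k ≤ j then c k else 0), by simp [hc], fun m => ?_⟩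
    have h1 := HZ_step a (b / q ^ j) hq0 hq1 (m + (j + 1 : ℕ))
    rw [div_div, ← pow_succ] at h1
    rw [h1, show m + ((j + 1 : ℕ) : ℤ) - 1 = m + j by push_cast; ring, h m,
      show m + ((j + 1 : ℕ) : ℤ) = (m + 1) + j by push_cast; ring, h (m + 1)]
    simp only [sub_mul, sum_sub_distrib]
    congr 1
    · rw [sum_range_succ' _ (j + 1)]
      simp [add_left_comm, add_comm]
    · rw [sum_range_succ _ (j + 1), mul_sum]
      simp only [show ¬ (j + 1 ≤ j) by omega, if_false, mul_zero, zero_mul, add_zero]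
      refine sum_congr rfl fun k hk => ?_
      rw [if_pos (by simp at hk; omega)]
      ring

lemma det_shift (a b : ℝ) {q : ℝ} (hq0 : 0 < q) (hq1 : q < 1) (l : ℕ) (m : Fin l → ℤ) :
    Matrix.det (Matrix.of fun i j : Fin l => HZ a (b / q ^ (j : ℕ)) q (m i + (j : ℕ)))
      = Matrix.det (Matrix.of fun i j : Fin l => HZ a b q (m i + (j : ℕ))) := by
  choose c hc h using HZ_comb a b hq0 hq1
  let U : Matrix (Fin l) (Fin l) ℝ := Matrix.of fun k j => if k ≤ j then c j k else 0
  have hU : U.det = 1 := by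
    rw [Matrix.det_of_isUpperTriangular]
    · simp [U, hc]
    · intro i j hij
      simp only [id] at hij
      simp [U, hij]
  have : (Matrix.of fun i j : Fin l => HZ a (b / q ^ (j : ℕ)) q (m i + (j : ℕ)))
      = (Matrix.of fun i j : Fin l => HZ a b q (m i + (j : ℕ))) * U := by
    ext i j
    rw [Matrix.mul_apply]
    simp only [Matrix.of_apply, U, h]
    have e := Fin.sum_univ_eq_sum_range (fun k => HZ a b q (m i + k) *
      (if k ≤ (j : ℕ) then c j k else 0)) l
    simp only [Fin.le_def]
    rw [e]
    symm
    rw [← sum_subset (s₁ := range (j + 1))]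
    · refine sum_congr rfl fun k hk => ?_
      rw [if_pos (by simp at hk; omega)]
      ring
    · intro x; simp; omega
    · intro x _ hx
      rw [if_neg (by simp at hx; omega), mul_zero]
  rw [this, Matrix.det_mul, hU, mul_one]

noncomputable def Dq (q : ℝ) (n : ℕ) : ℝ := ∏ t ∈ range n, (1 - q ^ (t + 1))

noncomputable def DZ (q : ℝ) (n : ℤ) : ℝ := if n < 0 then 0 else (Dq q n.toNat)⁻¹

lemma Dq_ne {q : ℝ} (hq0 : 0 < q) (hq1 : q < 1) (n : ℕ) : Dq q n ≠ 0 :=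
  prod_ne_zero_iff.2 fun t _ => one_sub_ne hq0 hq1 t

lemma DZ_entry {q : ℝ} (hq0 : 0 < q) (hq1 : q < 1) (m k : ℕ) :
    DZ q ((m : ℤ) - k) = (Dq q m)⁻¹ *
      ((∏ t ∈ range k, (-(q ^ t)⁻¹)) * ∏ t ∈ range k, (q ^ m - q ^ t)) := by
  induction k with
  | zero => simp [DZ]
  | succ k ih =>
    rw [prod_range_succ, prod_range_succ]
    have : DZ q ((m : ℤ) - (k + 1 : ℕ))
        = DZ q ((m : ℤ) - k) * (-(q ^ k)⁻¹ * (q ^ m - q ^ k)) := by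
      rcases lt_trichotomy m k with h | h | h
      · simp [DZ, show (m : ℤ) - k < 0 by omega, show (m : ℤ) - (k + 1) < 0 by omega]
      · subst h
        simp [DZ]
      · obtain ⟨d, rfl⟩ : ∃ d, m = k + 1 + d := ⟨m - k - 1, by omega⟩
        have e1 : ((k + 1 + d : ℕ) : ℤ) - (k + 1 : ℕ) = d := by push_cast; ring
        have e2 : ((k + 1 + d : ℕ) : ℤ) - k = (d + 1 : ℕ) := by push_cast; ring
        rw [e1, e2]
        simp only [DZ, Int.toNat_natCast, show ¬ ((d : ℤ) < 0) by omega,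
          show ¬ (((d + 1 : ℕ) : ℤ) < 0) by omega, if_false]
        have h3 := Dq_ne hq0 hq1 d
        have h4 := one_sub_ne hq0 hq1 d
        rw [show Dq q (d + 1) = Dq q d * (1 - q ^ (d + 1)) from prod_range_succ _ _]
        field_simp
        ring
    rw [this, ih]
    ring

lemma det_D {q : ℝ} (hq0 : 0 < q) (hq1 : q < 1) (n : ℕ) (lam : Fin n → ℕ) :
    Matrix.det (Matrix.of fun i k : Fin n => DZ q ((lam i : ℤ) - (k : ℕ)))
      = (∏ i, (Dq q (lam i))⁻¹) *
        ∏ i : Fin n, ∏ j ∈ Ioi i, ((q ^ (i : ℕ))⁻¹ * (q ^ lam i - q ^ lam j)) := by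
  simp only [DZ_entry hq0 hq1]
  have h1 := Matrix.det_mul_column (fun i => (Dq q (lam i))⁻¹) (Matrix.of fun i k : Fin n =>
    (∏ t ∈ range k, (-(q ^ t)⁻¹)) * ∏ t ∈ range k, (q ^ lam i - q ^ t))
  simp only [Matrix.of_apply] at h1
  rw [h1]
  have h2 := Matrix.det_mul_row (fun k : Fin n => ∏ t ∈ range k, (-(q ^ t)⁻¹))
    (Matrix.of fun i k : Fin n => ∏ t ∈ range k, (q ^ lam i - q ^ t))
  simp only [Matrix.of_apply] at h2
  rw [h2]
  have h3 := Matrix.det_eval_matrixOfPolynomials_eq_det_vandermonde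
    (fun i => q ^ lam i)
    (fun k : Fin n => ∏ t ∈ range k, (Polynomial.X - Polynomial.C (q ^ t)))
    (fun i => by
      rw [Polynomial.natDegree_prod_of_monic _ _
      (fun t _ => Polynomial.monic_X_sub_C _)]
      simp only [Polynomial.natDegree_X_sub_C]
      simp)
    (fun i => Polynomial.monic_prod_of_monic _ _ (fun t _ => Polynomial.monic_X_sub_C _))
  simp only [Polynomial.eval_prod, Polynomial.eval_sub, Polynomial.eval_X,
    Polynomial.eval_C] at h3
  rw [← h3, Matrix.det_vandermonde]
  congr 1
  have h4 : ∏ k : Fin n, ∏ t ∈ range k, (-(q ^ t)⁻¹)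
      = ∏ i : Fin n, ∏ j ∈ Ioi i, (-(q ^ (i : ℕ))⁻¹) := by
    have : ∀ k : Fin n, ∏ t ∈ range k, (-(q ^ t)⁻¹)
        = ∏ i ∈ Iio k, (-(q ^ (i : ℕ))⁻¹) := by
      intro k
      rw [← Nat.Iio_eq_range, ← Fin.map_valEmbedding_Iio, prod_map]
      rfl
    simp only [this]
    apply prod_comm'
    simp
  rw [h4, ← prod_mul_distrib]
  refine prod_congr rfl fun i _ => ?_
  rw [← prod_mul_distrib]
  refine prod_congr rfl fun j _ => ?_
  ring

lemma prod_pairs_rev (l : ℕ) (f : ℕ → ℕ → ℝ) :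
    ∏ i : Fin l, ∏ j ∈ Ioi i, f (Fin.rev j) (Fin.rev i)
      = ∏ i ∈ range l, ∏ r ∈ Ioo i l, f i r := by
  have h1 : ∀ i ∈ range l, ∏ r ∈ Ioo i l, f i r
      = ∏ r ∈ range l, if i < r then f i r else 1 := by
    intro i _
    rw [← prod_filter]
    congr 1
    ext r; simp; omega
  rw [prod_congr rfl h1, ← Fin.prod_univ_eq_prod_range
    (fun i => ∏ r ∈ range l, if i < r then f i r else 1)]
  have h2 : ∀ i : Fin l, ∏ r ∈ range l, (if (i : ℕ) < r then f i r else 1)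
      = ∏ r : Fin l, if i < r then f i r else 1 := by
    intro i
    exact (Fin.prod_univ_eq_prod_range (fun r => if (i : ℕ) < r then f i r else 1) l).symm
  simp only [h2]
  have h3 : ∀ i : Fin l, ∏ j ∈ Ioi i, f (Fin.rev j) (Fin.rev i)
      = ∏ j : Fin l, if i < j then f (Fin.rev j) (Fin.rev i) else 1 := by
    intro i
    rw [← prod_filter]
    congr 1
    ext r; simp
  simp only [h3]
  rw [prod_comm, ← Equiv.prod_comp Fin.revPerm]
  refine prod_congr rfl fun i _ => ?_
  rw [← Equiv.prod_comp Fin.revPerm]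
  refine prod_congr rfl fun j _ => ?_
  simp [Fin.rev_lt_rev]

lemma hook_prod (l : ℕ) (μ : ℕ → ℕ) (hmono : ∀ i j, i ≤ j → μ j ≤ μ i) (i : ℕ) (hi : i < l)
    (g : ℕ → ℝ) :
    (∏ j ∈ range (μ i), g (μ i + (((range l).filter fun r => j + 1 ≤ μ r).card) - (i + j + 1)))
      * ∏ r ∈ Ioo i l, g ((μ i + (l - 1 - i)) - (μ r + (l - 1 - r)))
      = ∏ t ∈ range (μ i + (l - 1 - i)), g (t + 1) := by
  set c : ℕ → ℕ := fun j => ((range l).filter fun r => j + 1 ≤ μ r).card with hc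
  have hcl : ∀ j, c j ≤ l := fun j => by
    simpa [hc] using card_filter_le (range l) (fun r => j + 1 ≤ μ r)
  have h1 : ∀ j r, r < l → j < μ r → r < c j := by
    intro j r hr hj
    have : range (r + 1) ⊆ (range l).filter fun r => j + 1 ≤ μ r := by
      intro x hx
      simp at hx ⊢
      have := hmono x r (by omega)
      omega
    simpa [hc] using card_le_card this
  have h2 : ∀ j r, μ r ≤ j → c j ≤ r := by
    intro j r hj
    have : ((range l).filter fun r => j + 1 ≤ μ r) ⊆ range r := by
      intro x hx
      simp at hx ⊢
      by_contra hh
      have := hmono r x (by omega)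
      omega
    simpa [hc] using card_le_card this
  have h3 : ∀ j j', j ≤ j' → c j' ≤ c j := by
    intro j j' hj
    apply card_le_card
    intro x hx
    simp at hx ⊢
    omega
  change (∏ j ∈ range (μ i), g (μ i + c j - (i + j + 1))) * _ = _
  have inj1 : Set.InjOn (fun j => μ i + c j - (i + j + 1)) (range (μ i)) := by
    intro x hx y hy hxy
    simp at hx hy hxy
    have a1 := h1 x i hi hx
    have a2 := h1 y i hi hy
    rcases le_total x y with h | h
    · have := h3 _ _ h; omega
    · have := h3 _ _ h; omega
  have inj2 : Set.InjOn (fun r => (μ i + (l - 1 - i)) - (μ r + (l - 1 - r))) (Ioo i l) := by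
    intro x hx y hy hxy
    simp at hx hy hxy
    have a1 := hmono i x (by omega)
    have a2 := hmono i y (by omega)
    rcases le_total x y with h | h
    · have := hmono _ _ h; omega
    · have := hmono _ _ h; omega
  have e1 := prod_image (f := g) inj1
  have e2 := prod_image (f := g) inj2
  rw [← e1, ← e2]
  have e3 := prod_image (s := range (μ i + (l - 1 - i))) (g := fun t => t + 1) (f := g)
    (by intro x _ y _ h; simpa using h)
  rw [← e3, ← prod_union]
  · congr 1
    apply eq_of_subset_of_card_le
    · intro x hx
      simp only [mem_union, mem_image, mem_range, mem_Ioo] at hx ⊢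
      rcases hx with ⟨j, hj, rfl⟩ | ⟨r, hr, rfl⟩
      · have a1 := h1 j i hi hj
        have a2 := hcl j
        exact ⟨μ i + c j - (i + j + 1) - 1, by omega, by omega⟩
      · have a1 := hmono i r (by omega)
        exact ⟨(μ i + (l - 1 - i)) - (μ r + (l - 1 - r)) - 1, by omega, by omega⟩
    · rw [card_union_of_disjoint, card_image_of_injOn inj1, card_image_of_injOn inj2]
      · refine card_image_le.trans ?_
        simp; omega
      · rw [disjoint_left]
        intro x hx hy
        simp only [mem_image, mem_range, mem_Ioo] at hx hy
        obtain ⟨j, hj, rfl⟩ := hx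
        obtain ⟨r, hr, h⟩ := hy
        have a1 := hmono i r (by omega)
        have a2 := h1 j i hi hj
        rcases lt_or_ge j (μ r) with h' | h'
        · have := h1 j r hr.2 h'; omega
        · have := h2 j r h'; omega
  · rw [disjoint_left]
    intro x hx hy
    simp only [mem_image, mem_range, mem_Ioo] at hx hy
    obtain ⟨j, hj, rfl⟩ := hx
    obtain ⟨r, hr, h⟩ := hy
    have a1 := hmono i r (by omega)
    have a2 := h1 j i hi hj
    rcases lt_or_ge j (μ r) with h' | h'
    · have := h1 j r hr.2 h'; omega
    · have := h2 j r h'; omega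

lemma det_DZ {q : ℝ} (hq0 : 0 < q) (hq1 : q < 1) (l : ℕ) (μ : ℕ → ℕ)
    (hmono : ∀ i j, i ≤ j → μ j ≤ μ i) :
    Matrix.det (Matrix.of fun i j : Fin l => DZ q ((μ i : ℤ) - (i : ℕ) + (j : ℕ)))
      = q ^ (∑ i ∈ range l, i * μ i) * ∏ i ∈ range l, ((Dq q (μ i + (l - 1 - i)))⁻¹ *
        ∏ r ∈ Ioo i l, (1 - q ^ ((μ i + (l - 1 - i)) - (μ r + (l - 1 - r))))) := by
  rw [← Matrix.det_submatrix_equiv_self Fin.revPerm]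
  have h1 : (Matrix.of fun i j : Fin l => DZ q ((μ i : ℤ) - (i : ℕ) + (j : ℕ))).submatrix
      Fin.revPerm Fin.revPerm = Matrix.of fun i k : Fin l =>
        DZ q (((μ (Fin.rev i) + (l - 1 - Fin.rev i) : ℕ) : ℤ) - (k : ℕ)) := by
    ext i k
    simp only [Matrix.submatrix_apply, Matrix.of_apply, Fin.revPerm_apply]
    congr 1
    have := i.2
    have := k.2
    simp only [Fin.val_rev]
    omega
  rw [h1, det_D hq0 hq1 l (fun i => μ (Fin.rev i) + (l - 1 - Fin.rev i))]
  have h2 : ∏ i : Fin l, (Dq q (μ (Fin.rev i) + (l - 1 - Fin.rev i)))⁻¹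
      = ∏ i ∈ range l, (Dq q (μ i + (l - 1 - i)))⁻¹ := by
    rw [← Fin.prod_univ_eq_prod_range (fun i => (Dq q (μ i + (l - 1 - i)))⁻¹),
      ← Equiv.prod_comp Fin.revPerm]
    simp
  have h3 := prod_pairs_rev l (fun i r => q ^ μ r *
    (1 - q ^ ((μ i + (l - 1 - i)) - (μ r + (l - 1 - r)))))
  have h4 : ∏ i : Fin l, ∏ j ∈ Ioi i, ((q ^ (i : ℕ))⁻¹ *
      (q ^ (μ (Fin.rev i) + (l - 1 - Fin.rev i)) - q ^ (μ (Fin.rev j) + (l - 1 - Fin.rev j))))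
      = ∏ i ∈ range l, ∏ r ∈ Ioo i l, (q ^ μ r *
    (1 - q ^ ((μ i + (l - 1 - i)) - (μ r + (l - 1 - r))))) := by
    rw [← h3]
    refine prod_congr rfl fun i _ => prod_congr rfl fun j hj => ?_
    have hij : (i : ℕ) < j := by simpa using hj
    have a1 := j.2
    have hm := hmono (Fin.rev j) (Fin.rev i) (by simp only [Fin.val_rev]; omega)
    have e1 : l - 1 - (Fin.rev i : ℕ) = i := by simp only [Fin.val_rev]; omega
    have e2 : l - 1 - (Fin.rev j : ℕ) = j := by simp only [Fin.val_rev]; omega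
    rw [e1, e2]
    obtain ⟨d, hd⟩ : ∃ d, μ (Fin.rev j) + j = μ (Fin.rev i) + i + d :=
      ⟨μ (Fin.rev j) + j - (μ (Fin.rev i) + i), by omega⟩
    rw [hd, Nat.add_sub_cancel_left]
    field_simp
    ring
  rw [h2, h4]
  simp only [prod_mul_distrib]
  have h5 : ∏ i ∈ range l, ∏ r ∈ Ioo i l, q ^ μ r = q ^ (∑ i ∈ range l, i * μ i) := by
    rw [prod_comm' (t' := range l) (s' := fun r => range r)
      (by intro x y; simp; omega), ← prod_pow_eq_pow_sum]
    refine prod_congr rfl fun r _ => ?_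
    rw [prod_const, card_range, ← pow_mul, mul_comm]
  rw [h5]
  ring

lemma generic_case (a b q : ℝ) (hq0 : 0 < q) (hq1 : q < 1) (l : ℕ) (μ : ℕ → ℕ)
    (hmono : ∀ i j, i ≤ j → μ j ≤ μ i)
    (hgen : ∀ t ∈ range l, a - b * q ^ ((t : ℤ) - l) ≠ 0) :
    Matrix.det (Matrix.of fun i j : Fin l => HZ a b q ((μ i : ℤ) + j - i))
      = q ^ (∑ i ∈ range l, i * μ i) *
          ∏ i ∈ range l, ∏ j ∈ range (μ i),
            (a - b * q ^ ((j : ℤ) - (i : ℤ))) /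
              (1 - q ^ (μ i + (((range l).filter fun r => j + 1 ≤ μ r).card) - (i + j + 1))) := by
  set P : ℕ → ℝ := fun n => ∏ t ∈ range n, (a - b * q ^ ((t : ℤ) - l)) with hP
  have hP0 : ∀ n ≤ l, P n ≠ 0 := by
    intro n hn
    refine prod_ne_zero_iff.2 fun t ht => hgen t ?_
    simp at ht ⊢; omega
  have hPs : ∀ j n, j ≤ l → P (l - j + n)
      = P (l - j) * ∏ t ∈ range n, (a - b * q ^ ((t : ℤ) - (j : ℤ))) := by
    intro j n hj
    simp only [hP]
    rw [prod_range_add]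
    congr 1
    refine prod_congr rfl fun t _ => ?_
    congr 3
    push_cast [hj]
    ring
  have h1 : (Matrix.of fun i j : Fin l => HZ a b q ((μ i : ℤ) + j - i))
      = Matrix.of fun i j : Fin l => HZ a b q (((μ i : ℤ) - (i : ℕ)) + (j : ℕ)) := by
    ext i j
    simp only [Matrix.of_apply]
    congr 1
    ring
  rw [h1, ← det_shift a b hq0 hq1 l (fun i => (μ i : ℤ) - (i : ℕ))]
  have h2 : ∀ i j : Fin l, HZ a (b / q ^ (j : ℕ)) q (((μ i : ℤ) - (i : ℕ)) + (j : ℕ))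
      = P (l - i + μ i) * ((P (l - j))⁻¹ * DZ q ((μ i : ℤ) - (i : ℕ) + (j : ℕ))) := by
    intro i j
    have := i.2
    have hj := j.2
    by_cases h : (μ i : ℤ) - (i : ℕ) + (j : ℕ) < 0
    · simp [HZ, DZ, h]
    · obtain ⟨n, hn⟩ : ∃ n : ℕ, (μ i : ℤ) - (i : ℕ) + (j : ℕ) = n :=
        ⟨((μ i : ℤ) - (i : ℕ) + (j : ℕ)).toNat, by omega⟩
      rw [hn]
      simp only [HZ, DZ, Int.toNat_natCast, show ¬ ((n : ℤ) < 0) by omega, if_false]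
      rw [show l - (i : ℕ) + μ i = l - j + n by omega, hPs _ _ hj.le]
      have := hP0 (l - j) (by omega)
      have e : ∏ t ∈ range n, (a - b / q ^ (j : ℕ) * q ^ t)
          = ∏ t ∈ range n, (a - b * q ^ ((t : ℤ) - ((j : ℕ) : ℤ))) := by
        refine prod_congr rfl fun t _ => ?_
        rw [zpow_sub₀ hq0.ne', zpow_natCast, zpow_natCast]
        ring
      rw [Hn, prod_div_distrib, e, Dq]
      field_simp
  simp only [h2]
  have h3 := Matrix.det_mul_column (fun i : Fin l => P (l - i + μ i))
    (Matrix.of fun i j : Fin l => (P (l - j))⁻¹ * DZ q ((μ i : ℤ) - (i : ℕ) + (j : ℕ)))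
  simp only [Matrix.of_apply] at h3
  rw [h3]
  have h4 := Matrix.det_mul_row (fun j : Fin l => (P (l - j))⁻¹)
    (Matrix.of fun i j : Fin l => DZ q ((μ i : ℤ) - (i : ℕ) + (j : ℕ)))
  simp only [Matrix.of_apply] at h4
  rw [h4, det_DZ hq0 hq1 l μ hmono,
    Fin.prod_univ_eq_prod_range (fun i => P (l - i + μ i)) l,
    Fin.prod_univ_eq_prod_range (fun i => (P (l - i))⁻¹) l]
  rw [mul_left_comm (∏ i ∈ range l, (P (l - i))⁻¹), mul_left_comm]
  congr 1
  rw [← prod_mul_distrib, ← prod_mul_distrib]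
  refine prod_congr rfl fun i hi => ?_
  have hi : i < l := by simpa using hi
  have h5 := hook_prod l μ hmono i hi (fun n => 1 - q ^ n)
  have h6 := Dq_ne hq0 hq1 (μ i + (l - 1 - i))
  rw [prod_div_distrib, hPs i (μ i) hi.le]
  have h7 := hP0 (l - i) (by omega)
  change _ = Dq q (μ i + (l - 1 - i)) at h5
  rw [← h5] at h6 ⊢
  have h8 := left_ne_zero_of_mul h6
  have h9 := right_ne_zero_of_mul h6
  field_simp

/-- The hook-content formula: if each power sum `p_n` is specialized to
`(aⁿ - bⁿ)/(1 - qⁿ)`, then `s_μ = q^{n(μ)} Π_{x ∈ μ} (a - b q^{c(x)})/(1 - q^{h(x)})`,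
where for the box `x` in row `i`, column `j` (1-based), `c(x) = j - i` is the content,
`h(x) = μᵢ + μᵗⱼ - i - j + 1` is the hook length, and `n(μ) = Σᵢ (i-1) μᵢ`.
Here `a, b` are arbitrary reals and `0 < q < 1`. -/
theorem schur_hook_content (a b q : ℝ) (hq0 : 0 < q) (hq1 : q < 1)
    (l : ℕ) (μ : ℕ → ℕ)
    (hmono : ∀ i j, i ≤ j → μ j ≤ μ i)
    (hsupp : ∀ i, l ≤ i → μ i = 0) :
    MvPolynomial.aeval
        (fun k : ℕ => (a ^ (k + 1) - b ^ (k + 1)) / (1 - q ^ (k + 1)))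
        (schur l μ)
      = q ^ (∑ i ∈ range l, i * μ i) *
          ∏ i ∈ range l, ∏ j ∈ range (μ i),
            (a - b * q ^ ((j : ℤ) - (i : ℤ))) /
              (1 - q ^ (μ i + (((range l).filter fun r => j + 1 ≤ μ r).card) - (i + j + 1))) := by
  rw [aeval_schur a b hq0 hq1]
  let S : Set ℝ := ((range l).image fun t : ℕ => b * q ^ ((t : ℤ) - l) : Finset ℝ)
  have hS : Dense Sᶜ := (Finset.countable_toSet _).dense_compl ℝ
  have hH : ∀ n : ℤ, Continuous fun a => HZ a b q n := by
    intro n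
    unfold HZ
    split_ifs
    · exact continuous_const
    · unfold Hn
      simp only [div_eq_mul_inv]
      fun_prop
  have hL : Continuous fun a =>
      Matrix.det (Matrix.of fun i j : Fin l => HZ a b q ((μ i : ℤ) + j - i)) := by
    apply Continuous.matrix_det
    exact continuous_matrix fun i j => hH _
  have hR : Continuous fun a : ℝ => q ^ (∑ i ∈ range l, i * μ i) *
          ∏ i ∈ range l, ∏ j ∈ range (μ i),
            (a - b * q ^ ((j : ℤ) - (i : ℤ))) /
              (1 - q ^ (μ i + (((range l).filter fun r => j + 1 ≤ μ r).card) - (i + j + 1))) := by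
    simp only [div_eq_mul_inv]
    fun_prop
  have := hL.ext_on hS hR (fun x hx => generic_case x b q hq0 hq1 l μ hmono (by
    intro t ht h
    apply hx
    simp only [S, coe_image, Set.mem_image]
    exact ⟨t, by simpa using ht, by linarith⟩))
  exact congrFun this a
end
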